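/- Fix a > 1 and let δ ∈ (0, e^{a−1}). Let m₊, m₋ : [0,δ) → ℝ be continuous and differentiable on (0,δ), and set W(s) = min( W^{+,m₊}(s), W^{−,m₋}(s) ) for s ∈ (0,δ). Assume W(s) ≥ 1 for all s ∈ (0,δ). Then for every integer k ≥ 1, liminf_{s→0⁺} ( W(s) − 1 − (1/8) Σ_{j=1}^{k} X₁(s)² ⋯ X_j(s)² ) · ( X₁(s)² ⋯ X_{k+1}(s)² )^{−1} ≤ 1/8. -/

import Mathlib

/-!
Only the branch `m = mp` of the minimum matters. If the liminf exceeded `1/8`, then near `0`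
`W ≥ 1 + V` with `V = S/8 + ε π²`, where `N = k + 1`, `π = X₁⋯X_N`, `S = ∑_{j ≤ N} (X₁⋯X_j)²` and
`ε > 0`. Together with `W ≤ W^{+,m}` this is a Riccati inequality for `1 - m` in the variable
`-log s`. The critical potential `S/4` has the explicit solution `-P/2` with
`P = ∑_{j ≤ N} X₁⋯X_j`, because `s X_j' = X₁⋯X_j · X_j` (`hasDerivAt_Xk`) gives
`s P' = (P² + S)/2` (`hasDerivAt_sumX`).

Put `w = 1 - m + P/2`, `z = w/π` and `τ = a - log X_N`, so that `s τ' = -π`. The Riccati inequality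
becomes `s z' ≤ -κ π (1 + z²)` for some `κ > 0` (`riccati_algebra`); the perturbative terms are
absorbed by `w²/2` and by `(V + s)² = o(π²)` (`isLittleO_sq_piX`, `isLittleO_id_piX`). Hence
`arctan z - κ τ` is antitone on some `(0, δ₀)`, so `τ` stays bounded as `s → 0⁺`, which contradicts
`X_N → 0⁺`.
-/

open MeasureTheory Real Filter Set

noncomputable section

abbrev E3 := EuclideanSpace ℝ (Fin 3)

/-- `i`-th partial derivative of a spinor field. -/
def pd (i : Fin 3) (φ : E3 → ℂ × ℂ) (x : E3) : ℂ × ℂ :=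
  fderiv ℝ φ x (EuclideanSpace.single i 1)

/-- The operator `σ·∇` built from the Pauli matrices. -/
def sigmaGrad (φ : E3 → ℂ × ℂ) (x : E3) : ℂ × ℂ :=
  ((pd 2 φ x).1 + (pd 0 φ x).2 - Complex.I * (pd 1 φ x).2,
   (pd 0 φ x).1 + Complex.I * (pd 1 φ x).1 - (pd 2 φ x).2)

/-- Squared norm of a two-spinor value. -/
def nsq (p : ℂ × ℂ) : ℝ := ‖p.1‖ ^ 2 + ‖p.2‖ ^ 2

/-- Pauli matrix `σ₁` acting on `ℂ²`. -/
def pauli1 (p : ℂ × ℂ) : ℂ × ℂ := (p.2, p.1)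

/-- Pauli matrix `σ₂` acting on `ℂ²`. -/
def pauli2 (p : ℂ × ℂ) : ℂ × ℂ := (-(Complex.I * p.2), Complex.I * p.1)

/-- Pauli matrix `σ₃` acting on `ℂ²`. -/
def pauli3 (p : ℂ × ℂ) : ℂ × ℂ := (p.1, -p.2)

/-- The spin-orbit operator `σ·L`. -/
def sigmaL (φ : E3 → ℂ × ℂ) (x : E3) : ℂ × ℂ :=
  (-Complex.I) •
    (pauli1 ((x 1 : ℂ) • pd 2 φ x - (x 2 : ℂ) • pd 1 φ x) +
     pauli2 ((x 2 : ℂ) • pd 0 φ x - (x 0 : ℂ) • pd 2 φ x) +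
     pauli3 ((x 0 : ℂ) • pd 1 φ x - (x 1 : ℂ) • pd 0 φ x))

/-- `σ·x = σ₁x₁ + σ₂x₂ + σ₃x₃` acting on a spinor value. -/
def sigmaDotX (x : E3) (p : ℂ × ℂ) : ℂ × ℂ :=
  ((x 2 : ℂ) * p.1 + ((x 0 : ℂ) - Complex.I * (x 1 : ℂ)) * p.2,
   ((x 0 : ℂ) + Complex.I * (x 1 : ℂ)) * p.1 - (x 2 : ℂ) * p.2)

/-- Inequality (R8) for a weight `W`, a radius `R` and a constant `C`. -/
def IneqR8 (W : ℝ → ℝ) (R C : ℝ) : Prop :=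
  ∀ φ : E3 → ℂ × ℂ, ContDiff ℝ (⊤ : ℕ∞) φ → HasCompactSupport φ →
    (∫ x : E3, (W ‖x‖ / ‖x‖) * nsq (φ x)) +
        C * (∫ x in Metric.sphere (0 : E3) R, nsq (φ x) ∂μH[2]) ≤
      ∫ x : E3, (nsq (sigmaGrad φ x) / (1 + W ‖x‖ / ‖x‖) + nsq (φ x))

/-- Iterated logarithmic functions: `Xk a 1 = (a - log s)⁻¹`, `Xk a (k+1) = X₁ ∘ Xk a k`. -/
def Xk (a : ℝ) : ℕ → ℝ → ℝ
  | 0, s => s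
  | k + 1, s => (a - Real.log (Xk a k s))⁻¹

/-- `π_j(s) = X₁(s)⋯X_j(s)`. -/
def piX (a : ℝ) (j : ℕ) (s : ℝ) : ℝ := ∏ i ∈ Finset.Icc 1 j, Xk a i s

/-- `Σ_{j=1}^k X₁(s)²⋯X_j(s)²`. -/
def sumX2 (a : ℝ) (k : ℕ) (s : ℝ) : ℝ := ∑ j ∈ Finset.Icc 1 k, (piX a j s) ^ 2

open scoped Topology
open Asymptotics

/-! ### Algebra and limits of the iterated logarithms -/

/-- `P_n(s) = ∑_{j=1}^n X₁(s)⋯X_j(s)`; `-P_n/2` is the exact solution of the critical Riccati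
equation in the variable `-log s`. -/
def sumX (a : ℝ) (n : ℕ) (s : ℝ) : ℝ := ∑ j ∈ Finset.Icc 1 n, piX a j s

lemma piX_succ (a : ℝ) (n : ℕ) (s : ℝ) : piX a (n + 1) s = piX a n s * Xk a (n + 1) s := by
  unfold piX
  rw [Finset.prod_Icc_succ_top (by omega)]

lemma sumX_succ (a : ℝ) (n : ℕ) (s : ℝ) : sumX a (n + 1) s = sumX a n s + piX a (n + 1) s := by
  unfold sumX
  rw [Finset.sum_Icc_succ_top (by omega)]

lemma sumX2_succ (a : ℝ) (n : ℕ) (s : ℝ) :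
    sumX2 a (n + 1) s = sumX2 a n s + piX a (n + 1) s ^ 2 := by
  unfold sumX2
  rw [Finset.sum_Icc_succ_top (by omega)]

lemma Xk_comp (a : ℝ) (n : ℕ) (s : ℝ) : Xk a (n + 1) s = Xk a n (Xk a 1 s) := by
  induction n with
  | zero => rfl
  | succ n ih =>
    change (a - Real.log (Xk a (n + 1) s))⁻¹ = (a - Real.log (Xk a n (Xk a 1 s)))⁻¹
    rw [ih]

lemma piX_comp (a : ℝ) (n : ℕ) (s : ℝ) :
    piX a (n + 1) s = Xk a 1 s * piX a n (Xk a 1 s) := by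
  induction n with
  | zero => simp [piX]
  | succ n ih => rw [piX_succ, ih, piX_succ, Xk_comp a (n + 1)]; ring

lemma tendsto_Xk (a : ℝ) (n : ℕ) : Tendsto (Xk a n) (𝓝[>] 0) (𝓝[>] 0) := by
  induction n with
  | zero => exact tendsto_id
  | succ n ih =>
    refine tendsto_inv_atTop_nhdsGT_zero.comp ?_
    simp_rw [sub_eq_add_neg]
    exact tendsto_atTop_add_const_left _ a
      (tendsto_neg_atBot_atTop.comp (Real.tendsto_log_nhdsGT_zero.comp ih))

lemma eventually_Xk_mem (a : ℝ) (n : ℕ) :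
    ∀ᶠ s in 𝓝[>] (0 : ℝ), ∀ i ≤ n, Xk a i s ∈ Ioo (0 : ℝ) 1 := by
  have h := (Finset.eventually_all (Finset.range (n + 1))).2 fun i _ =>
    (tendsto_Xk a i).eventually (Ioo_mem_nhdsGT (zero_lt_one' ℝ))
  filter_upwards [h] with s hs i hi
  exact hs i (Finset.mem_range.2 (by omega))

lemma piX_pos {a : ℝ} {n : ℕ} {s : ℝ} (h : ∀ i ≤ n, Xk a i s ∈ Ioo (0 : ℝ) 1) :
    0 < piX a n s :=
  Finset.prod_pos fun i hi => (h i (Finset.mem_Icc.1 hi).2).1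

/-! ### Derivatives -/

lemma hasDerivAt_Xk {a : ℝ} {n : ℕ} {s : ℝ} (h : ∀ i ≤ n, 0 < Xk a i s) :
    HasDerivAt (Xk a n) (piX a n s * Xk a n s / s) s := by
  induction n with
  | zero =>
    have hs : s ≠ 0 := (h 0 le_rfl).ne'
    have : piX a 0 s * Xk a 0 s / s = 1 := by simp [piX, Xk, hs]
    rw [this]
    exact hasDerivAt_id s
  | succ n ih =>
    have hs : s ≠ 0 := (h 0 (by omega)).ne'
    have hn := (h n (by omega)).ne'
    have hn1 : 0 < (a - Real.log (Xk a n s))⁻¹ := h (n + 1) le_rfl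
    have hne : a - Real.log (Xk a n s) ≠ 0 := (inv_pos.1 hn1).ne'
    have := (((ih fun i hi => h i (by omega)).log hn).const_sub a).inv hne
    refine this.congr_deriv ?_
    rw [piX_succ]
    change _ = piX a n s * (a - Real.log (Xk a n s))⁻¹ * (a - Real.log (Xk a n s))⁻¹ / s
    field_simp

lemma hasDerivAt_piX {a : ℝ} {n : ℕ} {s : ℝ} (h : ∀ i ≤ n, 0 < Xk a i s) :
    HasDerivAt (piX a n) (piX a n s * sumX a n s / s) s := by
  induction n with
  | zero =>
    have h0 : piX a 0 = fun _ => 1 := by ext; simp [piX]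
    rw [h0]
    simpa [sumX] using hasDerivAt_const s (1 : ℝ)
  | succ n ih =>
    have h0 : piX a (n + 1) = fun s => piX a n s * Xk a (n + 1) s := by ext; rw [piX_succ]
    have := (ih fun i hi => h i (by omega)).mul (hasDerivAt_Xk h)
    rw [h0]
    refine this.congr_deriv ?_
    simp only [sumX_succ, piX_succ]
    ring

/-- The identity `2 ∑ π_j P_j = P² + ∑ π_j²` (with `π_j = piX a j`, `P_j = sumX a j`) in
derivative form. -/
lemma hasDerivAt_sumX {a : ℝ} {n : ℕ} {s : ℝ} (h : ∀ i ≤ n, 0 < Xk a i s) :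
    HasDerivAt (sumX a n) ((sumX a n s ^ 2 + sumX2 a n s) / (2 * s)) s := by
  induction n with
  | zero =>
    have h0 : sumX a 0 = fun _ => 0 := by ext; simp [sumX]
    rw [h0]
    simpa [sumX2] using hasDerivAt_const s (0 : ℝ)
  | succ n ih =>
    have hs : s ≠ 0 := (h 0 (by omega)).ne'
    have h0 : sumX a (n + 1) = fun s => sumX a n s + piX a (n + 1) s := by ext; rw [sumX_succ]
    have := (ih fun i hi => h i (by omega)).add (hasDerivAt_piX h)
    rw [h0]
    refine this.congr_deriv ?_
    simp only [sumX_succ, sumX2_succ]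
    field_simp
    ring

/-! ### Asymptotic comparison at zero -/

lemma isLittleO_id_Xk_one_sq (a : ℝ) :
    (fun s : ℝ => s) =o[𝓝[>] 0] fun s => Xk a 1 s ^ 2 := by
  have h1 : Tendsto (fun s : ℝ => (a * s ^ (1 / 2 : ℝ) - Real.log s * s ^ (1 / 2 : ℝ)) ^ 2)
      (𝓝[>] 0) (𝓝 0) := by
    have h2 := tendsto_log_mul_rpow_nhdsGT_zero (r := 1 / 2) (by norm_num)
    have h3 : Tendsto (fun s : ℝ => s ^ (1 / 2 : ℝ)) (𝓝[>] 0) (𝓝 0) := by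
      have := (Real.continuousAt_rpow_const 0 (1 / 2 : ℝ) (Or.inr (by norm_num))).tendsto
      rw [Real.zero_rpow (by norm_num)] at this
      exact this.mono_left nhdsWithin_le_nhds
    simpa using ((h3.const_mul a).sub h2).pow 2
  refine (isLittleO_iff_tendsto' ?_).2 (h1.congr' ?_)
  · filter_upwards [eventually_Xk_mem a 1] with s hs h
    exact absurd h (pow_pos (hs 1 le_rfl).1 2).ne'
  · filter_upwards [self_mem_nhdsWithin] with s hs
    have h4 : (s ^ (1 / 2 : ℝ)) ^ 2 = s := by
      rw [← Real.sqrt_eq_rpow, Real.sq_sqrt (le_of_lt hs)]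
    change _ = s / ((a - Real.log s)⁻¹) ^ 2
    rw [← sub_mul, mul_pow, h4, inv_pow, div_inv_eq_mul, mul_comm]

/-- Each `X_{j+1}` decays slower than every power of `X_j`, so `s` is negligible against any
product `X₁⋯X_n`; the induction peels off `X₁` and substitutes `X₁` for `s`. -/
lemma isLittleO_id_piX (a : ℝ) (n : ℕ) (hn : 1 ≤ n) :
    (fun s : ℝ => s) =o[𝓝[>] 0] piX a n := by
  induction n, hn using Nat.le_induction with
  | base =>
    have h0 : piX a 1 = Xk a 1 := by ext; simp [piX]
    rw [h0]
    refine (isLittleO_id_Xk_one_sq a).trans_isBigO ?_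
    refine IsBigO.of_bound 1 ?_
    filter_upwards [eventually_Xk_mem a 1] with s hs
    obtain ⟨h1, h2⟩ := hs 1 le_rfl
    rw [Real.norm_of_nonneg (by positivity), Real.norm_of_nonneg h1.le]
    nlinarith
  | succ n hn ih =>
    have h0 : piX a (n + 1) = fun s => Xk a 1 s * piX a n (Xk a 1 s) := by ext; rw [piX_comp]
    rw [h0]
    refine (isLittleO_id_Xk_one_sq a).trans ?_
    simp_rw [pow_two]
    exact (isBigO_refl _ _).mul_isLittleO (ih.comp_tendsto (tendsto_Xk a 1))

lemma isLittleO_Xk_one_sq_piX (a : ℝ) (n : ℕ) (hn : 1 ≤ n) :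
    (fun s => Xk a 1 s ^ 2) =o[𝓝[>] 0] piX a (n + 1) := by
  have h0 : piX a (n + 1) = fun s => Xk a 1 s * piX a n (Xk a 1 s) := by ext; rw [piX_comp]
  rw [h0]
  simp_rw [pow_two]
  exact (isBigO_refl _ _).mul_isLittleO ((isLittleO_id_piX a n hn).comp_tendsto (tendsto_Xk a 1))

lemma isLittleO_sq_piX (a : ℝ) (n j : ℕ) (hn : 1 ≤ n) (hj : 1 ≤ j) :
    (fun s => piX a j s ^ 2) =o[𝓝[>] 0] piX a (n + 1) := by
  refine IsBigO.trans_isLittleO ?_ (isLittleO_Xk_one_sq_piX a n hn)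
  refine IsBigO.pow (IsBigO.of_bound 1 ?_) 2
  filter_upwards [eventually_Xk_mem a j] with s hs
  have h1 : piX a j s ≤ Xk a 1 s := by
    unfold piX
    rw [← Finset.mul_prod_erase _ _ (Finset.mem_Icc.2 ⟨le_rfl, hj⟩)]
    refine mul_le_of_le_one_right (hs 1 hj).1.le (Finset.prod_le_one ?_ ?_) <;> intro i hi <;>
      have := hs i (Finset.mem_Icc.1 (Finset.mem_of_mem_erase hi)).2
    exacts [this.1.le, this.2.le]
  rw [Real.norm_of_nonneg (piX_pos hs).le, Real.norm_of_nonneg (hs 1 hj).1.le]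
  linarith

/-- The perturbation `(V + s)²` is eventually dominated by `π²`, where `V = S/8 + ε π²`. -/
lemma eventually_error (a ε : ℝ) (hε : 0 < ε) (n : ℕ) (hn : 1 ≤ n) :
    ∀ᶠ s in 𝓝[>] (0 : ℝ),
      2 * (sumX2 a (n + 1) s / 8 + ε * piX a (n + 1) s ^ 2 + s) ^ 2 ≤ ε * piX a (n + 1) s ^ 2 := by
  have h1 : (fun s => sumX2 a (n + 1) s) =o[𝓝[>] 0] piX a (n + 1) := by
    have h0 : (fun s => sumX2 a (n + 1) s) =
        ∑ j ∈ Finset.Icc 1 (n + 1), fun s => piX a j s ^ 2 := by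
      ext; simp [sumX2]
    rw [h0]
    exact IsLittleO.sum fun j hj => isLittleO_sq_piX a n j hn (Finset.mem_Icc.1 hj).1
  have h2 := ((h1.const_mul_left (1 / 8)).add
    ((isLittleO_sq_piX a n (n + 1) hn (by omega)).const_mul_left ε)).add
    (isLittleO_id_piX a (n + 1) (by omega))
  have h3 := h2.pow (n := 2) (by norm_num)
  filter_upwards [h3.bound (show 0 < ε / 2 by linarith)] with s hs
  rw [Real.norm_of_nonneg (by positivity), Real.norm_of_nonneg (by positivity)] at hs
  have : sumX2 a (n + 1) s / 8 = 1 / 8 * sumX2 a (n + 1) s := by ring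
  rw [this]
  linarith

/-! ### Riccati inequality -/

/-- The Riccati inequality after the substitution `m = 1 - w + P/2`, `D = s m'`: the cross term
`(V + s) w` is split by Young's inequality into `w²/2` and `2 (V + s)²`. -/
lemma riccati_algebra {m D s S P p ε κ : ℝ} (hs : 0 < s) (hS : 0 ≤ S) (hP : 0 ≤ P) (hε : 0 < ε)
    (hκ1 : κ ≤ 1 / 2) (hκ2 : κ ≤ ε)
    (hD : (1 + m ^ 2) * (1 + (S / 8 + ε * p ^ 2)) ≤ 2 * m + D - s * m ^ 2 + s)
    (herr : 2 * (S / 8 + ε * p ^ 2 + s) ^ 2 ≤ ε * p ^ 2) :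
    -D + (P ^ 2 + S) / 4 - (1 - m + P / 2) * P ≤ -κ * (p ^ 2 + (1 - m + P / 2) ^ 2) := by
  obtain ⟨w, hw⟩ : ∃ w, w = 1 - m + P / 2 := ⟨_, rfl⟩
  have hm : m = 1 - w + P / 2 := by linarith
  obtain ⟨V, hV⟩ : ∃ V, V = S / 8 + ε * p ^ 2 := ⟨_, rfl⟩
  have hV0 : 0 ≤ V := by rw [hV]; positivity
  rw [← hw]
  rw [← hV] at hD herr
  have hu : 0 ≤ (V + s) * ((w - P / 2) ^ 2 + P) := by positivity
  have hy : 0 ≤ (w - 2 * (V + s)) ^ 2 := sq_nonneg _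
  have h1 : κ * p ^ 2 ≤ ε * p ^ 2 := by gcongr
  have h2 : κ * w ^ 2 ≤ 1 / 2 * w ^ 2 := by gcongr
  have hS' : S = 8 * V - 8 * (ε * p ^ 2) := by linarith
  subst hm hS'
  nlinarith

theorem liminf_W_min (a : ℝ) (ha : 1 < a) (δ : ℝ)
    (hδ : δ ∈ Set.Ioo 0 (Real.exp (a - 1)))
    (mp mm : ℝ → ℝ)
    (hcp : ContinuousOn mp (Set.Ico 0 δ)) (hcm : ContinuousOn mm (Set.Ico 0 δ))
    (hdp : ∀ s ∈ Set.Ioo 0 δ, DifferentiableAt ℝ mp s)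
    (hdm : ∀ s ∈ Set.Ioo 0 δ, DifferentiableAt ℝ mm s)
    (W : ℝ → ℝ)
    (hW : ∀ s ∈ Set.Ioo 0 δ, W s =
      min ((2 * mp s + s * deriv mp s - s * (mp s) ^ 2 + s) / (1 + (mp s) ^ 2))
          ((2 * mm s - s * deriv mm s - s * (mm s) ^ 2 + s) / (1 + (mm s) ^ 2)))
    (hW1 : ∀ s ∈ Set.Ioo 0 δ, 1 ≤ W s) (k : ℕ) (hk : 1 ≤ k) :
    Filter.liminf
      (fun s => (W s - 1 - (1 / 8) * sumX2 a k s) * ((piX a (k + 1) s) ^ 2)⁻¹)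
      (nhdsWithin 0 (Set.Ioi 0)) ≤ 1 / 8 := by
  -- `Real.sSup_le` covers the junk cases of the real-valued `liminf` as well.
  rw [Filter.liminf_eq]
  refine Real.sSup_le ?_ (by norm_num)
  intro c hc
  by_contra! hc8
  obtain ⟨ε, hε⟩ : ∃ ε, ε = c - 1 / 8 := ⟨_, rfl⟩
  have hε0 : 0 < ε := by linarith
  obtain ⟨κ, hκ⟩ : ∃ κ, κ = min (1 / 2) ε := ⟨_, rfl⟩
  have hκ0 : 0 < κ := by rw [hκ]; exact lt_min (by norm_num) hε0
  have hδ' : ∀ᶠ s in 𝓝[>] (0 : ℝ), s ∈ Ioo 0 δ := Ioo_mem_nhdsGT hδ.1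
  rw [Set.mem_ofPred_eq] at hc
  have hev := ((hc.and hδ').and (eventually_Xk_mem a (k + 1))).and
    (eventually_error a ε hε0 k hk)
  obtain ⟨δ₀, hδ₀, hsub⟩ := mem_nhdsGT_iff_exists_Ioo_subset.1 hev
  obtain ⟨z, hz⟩ : ∃ z : ℝ → ℝ,
    z = fun s => (1 - mp s + sumX a (k + 1) s / 2) / piX a (k + 1) s := ⟨_, rfl⟩
  obtain ⟨τ, hτ⟩ : ∃ τ : ℝ → ℝ, τ = fun s => a - Real.log (Xk a (k + 1) s) := ⟨_, rfl⟩
  have hderiv : ∀ s ∈ Ioo 0 δ₀, ∃ G' ≤ 0,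
      HasDerivAt (fun s => Real.arctan (z s) - κ * τ s) G' s := by
    intro s hs
    obtain ⟨⟨⟨hcs, hsδ⟩, hX⟩, herr⟩ := hsub hs
    have hX0 : ∀ i ≤ k + 1, 0 < Xk a i s := fun i hi => (hX i hi).1
    have hp : 0 < piX a (k + 1) s := piX_pos hX
    have hs0 : 0 < s := hsδ.1
    have hXN := hX0 (k + 1) le_rfl
    have hzd : HasDerivAt z
        (((-deriv mp s + (sumX a (k + 1) s ^ 2 + sumX2 a (k + 1) s) / (2 * s) / 2) *
          piX a (k + 1) s - (1 - mp s + sumX a (k + 1) s / 2) *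
          (piX a (k + 1) s * sumX a (k + 1) s / s)) / piX a (k + 1) s ^ 2) s := by
      rw [hz]
      exact (((hdp s hsδ).hasDerivAt.const_sub 1).add ((hasDerivAt_sumX hX0).div_const 2)).div
        (hasDerivAt_piX hX0) hp.ne'
    have hτd : HasDerivAt τ _ s := hτ ▸ ((hasDerivAt_Xk hX0).log hXN.ne').const_sub a
    refine ⟨_, ?_, hzd.arctan.sub (hτd.const_mul κ)⟩
    have hW' := (hW s hsδ).trans_le (min_le_left _ _)
    rw [le_div_iff₀ (by positivity)] at hW'
    have hcs' : c * piX a (k + 1) s ^ 2 ≤ W s - 1 - 1 / 8 * sumX2 a k s := by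
      rwa [← div_eq_mul_inv, le_div_iff₀ (by positivity)] at hcs
    have hWV : 1 + (sumX2 a (k + 1) s / 8 + ε * piX a (k + 1) s ^ 2) ≤ W s := by
      rw [sumX2_succ, hε]
      linarith
    have key := riccati_algebra (m := mp s) (D := s * deriv mp s) (s := s) (κ := κ)
      (S := sumX2 a (k + 1) s) (P := sumX a (k + 1) s) (p := piX a (k + 1) s) hs0
      (Finset.sum_nonneg fun _ _ => sq_nonneg _)
      (Finset.sum_nonneg fun j hj => (piX_pos fun i hi =>
        hX i (hi.trans (Finset.mem_Icc.1 hj).2)).le) hε0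
      (hκ ▸ min_le_left _ _) (hκ ▸ min_le_right _ _)
      ((by rw [mul_comm]; gcongr : _ ≤ W s * (1 + mp s ^ 2)).trans hW') herr
    rw [hz]
    dsimp only
    generalize piX a (k + 1) s = p at *
    generalize sumX a (k + 1) s = P at *
    generalize sumX2 a (k + 1) s = S at *
    generalize Xk a (k + 1) s = X at *
    generalize deriv mp s = m' at *
    generalize mp s = m at *
    obtain ⟨w, hw⟩ : ∃ w, w = 1 - m + P / 2 := ⟨_, rfl⟩
    rw [← hw] at key ⊢
    have hpw : 0 < p ^ 2 + w ^ 2 := by positivity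
    have heq : 1 / (1 + (w / p) ^ 2) *
        (((-m' + (P ^ 2 + S) / (2 * s) / 2) * p - w * (p * P / s)) / p ^ 2) -
        κ * -(p * X / s / X) =
        p * (-(s * m') + (P ^ 2 + S) / 4 - w * P + κ * (p ^ 2 + w ^ 2)) / (s * (p ^ 2 + w ^ 2)) := by
      field_simp
      ring
    rw [heq]
    refine div_nonpos_of_nonpos_of_nonneg ?_ (by positivity)
    exact mul_nonpos_of_nonneg_of_nonpos hp.le (by linarith)
  have hanti : AntitoneOn (fun s => Real.arctan (z s) - κ * τ s) (Ioo 0 δ₀) := by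
    refine antitoneOn_of_deriv_nonpos (convex_Ioo 0 δ₀) ?_ ?_ ?_
    · intro s hs
      obtain ⟨_, _, h⟩ := hderiv s hs
      exact h.continuousAt.continuousWithinAt
    · rw [interior_Ioo]
      intro s hs
      obtain ⟨_, _, h⟩ := hderiv s hs
      exact h.differentiableAt.differentiableWithinAt
    · rw [interior_Ioo]
      intro s hs
      obtain ⟨_, h0, h⟩ := hderiv s hs
      rwa [h.deriv]
  have hτtop : Tendsto (fun s => κ * τ s) (𝓝[>] 0) atTop := by
    refine Tendsto.const_mul_atTop hκ0 ?_
    rw [hτ]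
    simp_rw [sub_eq_add_neg]
    exact tendsto_atTop_add_const_left _ a
      (tendsto_neg_atBot_atTop.comp (Real.tendsto_log_nhdsGT_zero.comp (tendsto_Xk a (k + 1))))
  have hδ₀' : 0 < δ₀ := hδ₀
  have hmid : δ₀ / 2 ∈ Ioo 0 δ₀ := ⟨by linarith, by linarith⟩
  obtain ⟨s, hs1, hs2⟩ := ((hτtop.eventually_gt_atTop
    (Real.pi / 2 - (Real.arctan (z (δ₀ / 2)) - κ * τ (δ₀ / 2)))).and
    (show ∀ᶠ s in 𝓝[>] (0 : ℝ), s ∈ Ioo 0 (δ₀ / 2) from Ioo_mem_nhdsGT hmid.1)).exists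
  have h1 := hanti ⟨hs2.1, hs2.2.trans hmid.2⟩ hmid hs2.2.le
  have h2 := Real.arctan_lt_pi_div_two (z s)
  simp only at h1
  linarith
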